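/- Let p be a prime and let R be a p-adically complete commutative ring equipped with a ring endomorphism φ. Then base change induces an equivalence from the category of étale φ-modules over R to the category of étale φ-modules over the p-adic completion of colim_φ R. -/

import Mathlib

universe u

/-- An étale `φ`-module over a commutative ring `R` equipped with a ring endomorphism
`φ`: a finitely generated projective `R`-module `M` together with an isomorphism
`F : φ*M = M ⊗_{R,φ} R ≃ M`.  The isomorphism is encoded by the `φ`-semilinear map
`frob = F ∘ (m ↦ m ⊗ 1)`, and the requirement that `F` be an isomorphism is encoded by
the universal property `etale`. -/
structure EtaleModuleOver (R : Type u) [CommRing R] (φ : R →+* R) : Type (u + 1) where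
  carrier : Type u
  [acg : AddCommGroup carrier]
  [mod : Module R carrier]
  finite : Module.Finite R carrier
  projective : Module.Projective R carrier
  frob : carrier →ₛₗ[φ] carrier
  etale : ∀ (T : Type u) [AddCommGroup T] [Module R T] (g : carrier →ₛₗ[φ] T),
    ∃! h : carrier →ₗ[R] T, ∀ m, h (frob m) = g m

attribute [instance] EtaleModuleOver.acg EtaleModuleOver.mod

/-- `b : M → N` exhibits the `S`-module `N` as the base change `S ⊗_R M` of the
`R`-module `M` along the ring homomorphism `ι : R → S`. -/
def IsBaseChangeAlong {R S : Type u} [CommRing R] [CommRing S] (ι : R →+* S)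
    (M : Type u) [AddCommGroup M] [Module R M]
    (N : Type u) [AddCommGroup N] [Module S N] (b : M →ₛₗ[ι] N) : Prop :=
  ∀ (T : Type u) [AddCommGroup T] [Module S T] (u : M →ₛₗ[ι] T),
    ∃! v : N →ₗ[S] T, ∀ m, v (b m) = u m

/-!
Modulo each power of `p`, the map `R → S` becomes an isomorphism after passing to the colimit over
Frobenius. So it induces a bijection between the fixed points of Frobenius-like operators, and in
the `p`-adic limit between the matrices over `R` and over `S` fixed by a twisted Frobenius
`X ↦ P · φ(X) · Q`.

An étale module is a Frobenius-compatible direct summand of a free étale module: a complement of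
the underlying projective module need not carry a Frobenius, but by Schanuel's lemma it can be
enlarged so that it does. A morphism of étale modules is then a fixed point of a twisted Frobenius
on matrices, which gives full faithfulness. For essential surjectivity, conjugating the Frobenius
matrix `X` of a free étale module over `S` by `X` itself replaces it by its Frobenius iterates,
which modulo `p ^ N` eventually come from `R`. Full faithfulness modulo `p ^ N` allows the changes
of basis to be chosen compatibly as `N` grows, and the idempotent cutting out a summand descends by
full faithfulness.
-/

open Function Filter Matrix
open scoped MatrixGroups

/-- `i : Y → Y'` intertwines `T` and `T'` and induces a bijection from the colimit of
`Y →T Y →T ⋯` to the colimit of `Y' →T' Y' →T' ⋯`. Surjectivity and injectivity on colimits are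
spelled out on elements. -/
structure IsIterateEquiv {Y Y' : Type*} (T : Y → Y) (T' : Y' → Y') (i : Y → Y') : Prop where
  semiconj : Function.Semiconj i T T'
  exists_iterate : ∀ y', ∃ k y, i y = T'^[k] y'
  exists_iterate_eq : ∀ y z, i y = i z → ∃ k, T^[k] y = T^[k] z

namespace IsIterateEquiv

section Set

variable {Y Y' : Type*} {T : Y → Y} {T' : Y' → Y'} {i : Y → Y'}

theorem eventually_exists_iterate (h : IsIterateEquiv T T' i) (y' : Y') :
    ∀ᶠ k in atTop, ∃ y, i y = T'^[k] y' := by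
  obtain ⟨k, y, hy⟩ := h.exists_iterate y'
  filter_upwards [eventually_ge_atTop k] with l hl
  obtain ⟨d, rfl⟩ := Nat.exists_eq_add_of_le' hl
  exact ⟨T^[d] y, by rw [Function.iterate_add_apply, ← hy, h.semiconj.iterate_right d y]⟩

theorem eventually_iterate_eq (h : IsIterateEquiv T T' i) {y z : Y} (hyz : i y = i z) :
    ∀ᶠ k in atTop, T^[k] y = T^[k] z := by
  obtain ⟨k, hk⟩ := h.exists_iterate_eq y z hyz
  filter_upwards [eventually_ge_atTop k] with l hl
  obtain ⟨d, rfl⟩ := Nat.exists_eq_add_of_le' hl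
  rw [Function.iterate_add_apply, hk, ← Function.iterate_add_apply]

theorem existsUnique_isFixedPt (h : IsIterateEquiv T T' i) {y' : Y'} (hy' : IsFixedPt T' y') :
    ∃! y, IsFixedPt T y ∧ i y = y' := by
  obtain ⟨k, y, hy⟩ := h.exists_iterate y'
  rw [hy'.iterate k] at hy
  obtain ⟨l, hl⟩ := h.exists_iterate_eq (T y) y (by rw [h.semiconj y, hy, hy'])
  have hfix : IsFixedPt T (T^[l] y) :=
    (Function.iterate_succ_apply' T l y).symm.trans hl
  have hmap : i (T^[l] y) = y' := by rw [h.semiconj.iterate_right l y, hy, hy'.iterate l]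
  refine ⟨T^[l] y, ⟨hfix, hmap⟩, fun z ⟨hz, hzy⟩ => ?_⟩
  obtain ⟨j, hj⟩ := h.exists_iterate_eq z (T^[l] y) (hzy.trans hmap.symm)
  rwa [hz.iterate j, hfix.iterate j] at hj

/-- Composing `T` and `T'` with corresponding operators from a family stable under passing
through `T` and `T'` changes the `k`-th iterates only by a further operator. -/
theorem twist (h : IsIterateEquiv T T' i) {κ : Type*} {L : κ → Y → Y} {L' : κ → Y' → Y'}
    (hL : ∀ a, Function.Semiconj i (L a) (L' a))
    (hcomp : ∀ a b, ∃ c, (∀ y, L a (T (L b y)) = L c (T y)) ∧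
      ∀ y', L' a (T' (L' b y')) = L' c (T' y')) (a : κ) :
    IsIterateEquiv (L a ∘ T) (L' a ∘ T') i := by
  have hiter (k : ℕ) : ∃ c, (∀ y, (L a ∘ T)^[k + 1] y = L c (T^[k + 1] y)) ∧
      ∀ y', (L' a ∘ T')^[k + 1] y' = L' c (T'^[k + 1] y') := by
    induction k with
    | zero => exact ⟨a, fun _ => rfl, fun _ => rfl⟩
    | succ k ih =>
      obtain ⟨b, hb, hb'⟩ := ih
      obtain ⟨c, hc, hc'⟩ := hcomp a b
      refine ⟨c, fun y => ?_, fun y' => ?_⟩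
      · rw [Function.iterate_succ_apply', hb, Function.comp_apply, hc,
          ← Function.iterate_succ_apply' T]
      · rw [Function.iterate_succ_apply', hb', Function.comp_apply, hc',
          ← Function.iterate_succ_apply' T']
  refine ⟨(hL a).comp_right h.semiconj, fun y' => ?_, fun y z hyz => ?_⟩
  · obtain ⟨k, ⟨y, hy⟩, hk⟩ :=
      ((h.eventually_exists_iterate y').and (eventually_ge_atTop 1)).exists
    obtain ⟨k, rfl⟩ := Nat.exists_eq_add_of_le' hk
    obtain ⟨c, -, hc⟩ := hiter k
    exact ⟨k + 1, L c y, by rw [hL c y, hy, hc]⟩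
  · obtain ⟨k, hk, hk1⟩ := ((h.eventually_iterate_eq hyz).and (eventually_ge_atTop 1)).exists
    obtain ⟨k, rfl⟩ := Nat.exists_eq_add_of_le' hk1
    obtain ⟨c, hc, -⟩ := hiter k
    exact ⟨k + 1, by rw [hc, hc, hk]⟩

theorem iterate_comp_left_apply {κ : Type*} (T : Y → Y) (k : ℕ) (f : κ → Y) (a : κ) :
    (fun f : κ → Y => T ∘ f)^[k] f a = T^[k] (f a) :=
  Function.Semiconj.iterate_right (f := fun f : κ → Y => f a) (fun _ => rfl) k f

theorem pi (h : IsIterateEquiv T T' i) (κ : Type*) [Finite κ] :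
    IsIterateEquiv (fun f : κ → Y => T ∘ f) (fun f : κ → Y' => T' ∘ f) (fun f => i ∘ f) := by
  refine ⟨fun f => funext fun a => h.semiconj (f a), fun f' => ?_, fun f g hfg => ?_⟩
  · obtain ⟨k, hk⟩ := (eventually_all.2 fun a => h.eventually_exists_iterate (f' a)).exists
    choose f hf using hk
    exact ⟨k, f, funext fun a => (hf a).trans (iterate_comp_left_apply T' k f' a).symm⟩
  · obtain ⟨k, hk⟩ :=
      (eventually_all.2 fun a => h.eventually_iterate_eq (congr_fun hfg a)).exists
    exact ⟨k, funext fun a => by rw [iterate_comp_left_apply, iterate_comp_left_apply, hk]⟩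

theorem matrix_map (h : IsIterateEquiv T T' i) (m n : Type*) [Finite m] [Finite n] :
    IsIterateEquiv (fun A : Matrix m n Y => A.map T) (fun A : Matrix m n Y' => A.map T')
      (fun A => A.map i) :=
  (h.pi n).pi m

end Set

theorem matrix_twist {R S : Type*} [Semiring R] [Semiring S] {φ : R →+* R} {ψ : S →+* S}
    {i : R →+* S} (h : IsIterateEquiv φ ψ i) {m n : Type*} [Fintype m] [Fintype n]
    (P : Matrix m m R) (Q : Matrix n n R) :
    IsIterateEquiv (fun A : Matrix m n R => P * A.map φ * Q)
      (fun A : Matrix m n S => P.map i * A.map ψ * Q.map i) (fun A => A.map i) := by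
  have hmap_m (B : Matrix m m R) : (B.map i).map ψ = (B.map φ).map i :=
    ((h.matrix_map m m).semiconj B).symm
  have hmap_n (B : Matrix n n R) : (B.map i).map ψ = (B.map φ).map i :=
    ((h.matrix_map n n).semiconj B).symm
  refine (h.matrix_map m n).twist (κ := Matrix m m R × Matrix n n R)
    (L := fun B A => B.1 * A * B.2) (L' := fun B A => B.1.map i * A * B.2.map i)
    (fun B A => by simp only [Matrix.map_mul]) (fun B C => ?_) (P, Q)
  refine ⟨(B.1 * C.1.map φ, C.2.map φ * B.2), fun A => ?_, fun A => ?_⟩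
  · simp only [Matrix.map_mul, Matrix.mul_assoc]
  · simp only [Matrix.map_mul, Matrix.mul_assoc, hmap_m, hmap_n]

theorem val_iterate_units_map {G : Type*} [Monoid G] (φ : G →* G) (k : ℕ) (u : Gˣ) :
    ((Units.map φ)^[k] u : G) = φ^[k] u :=
  Function.Semiconj.iterate_right (f := Units.val) (fun _ => rfl) k u

theorem units_map {G G' : Type*} [Monoid G] [Monoid G'] {φ : G →* G} {ψ : G' →* G'} {i : G →* G'}
    (h : IsIterateEquiv φ ψ i) : IsIterateEquiv (Units.map φ) (Units.map ψ) (Units.map i) := by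
  refine ⟨fun u => Units.ext (h.semiconj u), fun u' => ?_, fun u v huv => ?_⟩
  · obtain ⟨k, ⟨y, hy⟩, z, hz⟩ := ((h.eventually_exists_iterate (u' : G')).and
      (h.eventually_exists_iterate (↑u'⁻¹ : G'))).exists
    have hyz : i (y * z) = i 1 := by
      rw [map_mul, hy, hz, ← iterate_map_mul, Units.mul_inv, iterate_map_one, map_one]
    have hzy : i (z * y) = i 1 := by
      rw [map_mul, hy, hz, ← iterate_map_mul, Units.inv_mul, iterate_map_one, map_one]
    obtain ⟨l, hl, hl'⟩ :=
      ((h.eventually_iterate_eq hyz).and (h.eventually_iterate_eq hzy)).exists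
    rw [iterate_map_mul, iterate_map_one] at hl hl'
    refine ⟨l + k, ⟨φ^[l] y, φ^[l] z, hl, hl'⟩, Units.ext ?_⟩
    rw [val_iterate_units_map, Function.iterate_add_apply, ← hy, ← h.semiconj.iterate_right l y]
    rfl
  · obtain ⟨k, hk⟩ := h.exists_iterate_eq u v (congr_arg Units.val huv)
    exact ⟨k, Units.ext (by rw [val_iterate_units_map, val_iterate_units_map, hk])⟩

theorem generalLinearGroup_map {R S : Type*} [CommRing R] [CommRing S] {φ : R →+* R}
    {ψ : S →+* S} {i : R →+* S} (h : IsIterateEquiv φ ψ i) (m : Type*) [Fintype m]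
    [DecidableEq m] :
    IsIterateEquiv (GeneralLinearGroup.map (n := m) φ) (GeneralLinearGroup.map (n := m) ψ)
      (GeneralLinearGroup.map (n := m) i) :=
  units_map (φ := (φ.mapMatrix (m := m)).toMonoidHom) (ψ := (ψ.mapMatrix (m := m)).toMonoidHom)
    (i := (i.mapMatrix (m := m)).toMonoidHom) (h.matrix_map m m)

section Group

variable {G G' : Type*} [Group G] [Group G'] {φ : G →* G} {ψ : G' →* G'} {i : G →* G'}

theorem mul_twist (h : IsIterateEquiv φ ψ i) (a b : G) :
    IsIterateEquiv (fun g => a * φ g * b) (fun g => i a * ψ g * i b) i := by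
  refine h.twist (κ := G × G) (L := fun a g => a.1 * g * a.2)
    (L' := fun a g => i a.1 * g * i a.2) (fun a g => by simp only [map_mul]) (fun a b => ?_) (a, b)
  refine ⟨(a.1 * φ b.1, φ b.2 * a.2), fun g => ?_, fun g => ?_⟩
  · simp only [map_mul, mul_assoc]
  · simp only [map_mul, mul_assoc, (h.semiconj.eq _)]

theorem exists_mul_eq_map_mul (h : IsIterateEquiv φ ψ i) (x : G') :
    ∃ (c : G') (z : G), c * x = i z * ψ c := by
  have hconj (k : ℕ) : ∃ c : G', c * x = ψ^[k] x * ψ c := by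
    induction k with
    | zero => exact ⟨1, by simp⟩
    | succ k ih =>
      obtain ⟨c, hc⟩ := ih
      exact ⟨(ψ^[k] x)⁻¹ * c, by
        rw [mul_assoc, hc, map_mul, map_inv, Function.iterate_succ_apply', inv_mul_cancel_left,
          mul_inv_cancel_left]⟩
  obtain ⟨k, z, hz⟩ := h.exists_iterate x
  obtain ⟨c, hc⟩ := hconj k
  exact ⟨c, z, by rw [hc, hz]⟩

theorem exists_map_mul_eq (h : IsIterateEquiv φ ψ i) {x c c₁ : G'} {z z₁ : G}
    (hc : c * x = i z * ψ c) (hc₁ : c₁ * x = i z₁ * ψ c₁) :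
    ∃ k, i k * c₁ = c ∧ k * z₁ = z * φ k := by
  have hfix : IsFixedPt (fun g => i z * ψ g * i z₁⁻¹) (c * c₁⁻¹) := by
    have hz₁ : i z₁⁻¹ = ψ c₁ * (c₁ * x)⁻¹ := by rw [hc₁, map_inv]; group
    change i z * ψ (c * c₁⁻¹) * i z₁⁻¹ = c * c₁⁻¹
    rw [map_mul, ← mul_assoc, ← hc, hz₁, map_inv]
    group
  obtain ⟨k, ⟨hk, hkc⟩, -⟩ := (h.mul_twist z z₁⁻¹).existsUnique_isFixedPt hfix
  exact ⟨k, by rw [hkc, inv_mul_cancel_right], (eq_mul_inv_iff_mul_eq.1 hk.eq.symm)⟩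

end Group

end IsIterateEquiv

section Adic

variable {R : Type*} [CommRing R] {I : Ideal R} {m n : Type*}

theorem map_mk_pow_eq_of_le {A B : Matrix m n R} {M N : ℕ} (hMN : M ≤ N)
    (h : A.map (Ideal.Quotient.mk (I ^ N)) = B.map (Ideal.Quotient.mk (I ^ N))) :
    A.map (Ideal.Quotient.mk (I ^ M)) = B.map (Ideal.Quotient.mk (I ^ M)) := by
  ext a b
  have hab := congr_fun₂ h a b
  rw [Matrix.map_apply, Matrix.map_apply, Ideal.Quotient.eq] at hab ⊢
  exact Ideal.pow_le_pow_right hMN hab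

theorem eq_of_map_mk_pow_eq [IsHausdorff I R] {A B : Matrix m n R}
    (h : ∀ N, A.map (Ideal.Quotient.mk (I ^ N)) = B.map (Ideal.Quotient.mk (I ^ N))) : A = B := by
  ext a b
  refine IsHausdorff.eq_iff_smodEq (I := I) |>.2 fun N => ?_
  rw [SModEq.sub_mem, smul_eq_mul, Ideal.mul_top, ← Ideal.Quotient.eq]
  exact congr_fun₂ (h N) a b

theorem exists_map_mk_pow_eq [IsPrecomplete I R] (A : ℕ → Matrix m n R)
    (hA : ∀ N, (A (N + 1)).map (Ideal.Quotient.mk (I ^ N)) =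
      (A N).map (Ideal.Quotient.mk (I ^ N))) :
    ∃ L : Matrix m n R, ∀ N, L.map (Ideal.Quotient.mk (I ^ N)) =
      (A N).map (Ideal.Quotient.mk (I ^ N)) := by
  have hle {M N : ℕ} (hMN : M ≤ N) : (A M).map (Ideal.Quotient.mk (I ^ M)) =
      (A N).map (Ideal.Quotient.mk (I ^ M)) := by
    induction N, hMN using Nat.le_induction with
    | base => rfl
    | succ N hMN ih => exact ih.trans (map_mk_pow_eq_of_le hMN (hA N)).symm
  have hlim (a : m) (b : n) : ∃ x : R, ∀ N, A N a b ≡ x [SMOD I ^ N • (⊤ : Submodule R R)] := by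
    refine IsPrecomplete.prec inferInstance fun {M N} hMN => ?_
    rw [SModEq.sub_mem, smul_eq_mul, Ideal.mul_top, ← Ideal.Quotient.eq]
    exact congr_fun₂ (hle hMN) a b
  choose L hL using hlim
  refine ⟨L, fun N => ?_⟩
  ext a b
  have hab := (hL a b N).symm
  rwa [SModEq.sub_mem, smul_eq_mul, Ideal.mul_top, ← Ideal.Quotient.eq] at hab

variable [Fintype m] [DecidableEq m]

theorem isUnit_of_isUnit_map_mk_pow [IsAdicComplete I R] {A : Matrix m m R} {N : ℕ} (hN : N ≠ 0)
    (hA : IsUnit (A.map (Ideal.Quotient.mk (I ^ N)))) : IsUnit A := by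
  have : IsLocalHom (Ideal.Quotient.mk (I ^ N)) := isLocalHom_of_le_jacobson_bot _ <|
    (Ideal.pow_le_self hN).trans (IsAdicComplete.le_jacobson_bot I)
  rw [Matrix.isUnit_iff_isUnit_det] at hA ⊢
  rw [← RingHom.mapMatrix_apply, ← RingHom.map_det] at hA
  exact isUnit_of_map_unit _ _ hA

theorem generalLinearGroup_map_mk_pow_surjective [IsAdicComplete I R] (N : ℕ) :
    Function.Surjective (GeneralLinearGroup.map (n := m) (Ideal.Quotient.mk (I ^ N))) := by
  intro g
  choose A hA using fun a b => Ideal.Quotient.mk_surjective (g.val a b)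
  have hAg : (Matrix.of A).map (Ideal.Quotient.mk (I ^ N)) = g.val := by ext a b; exact hA a b
  rcases eq_or_ne N 0 with rfl | hN
  · have : Subsingleton (R ⧸ I ^ 0) := Ideal.Quotient.subsingleton_iff.2 <| by
      rw [pow_zero, Ideal.one_eq_top]
    exact ⟨1, Subsingleton.elim _ _⟩
  · obtain ⟨u, hu⟩ := isUnit_of_isUnit_map_mk_pow (I := I) hN (hAg ▸ g.isUnit)
    exact ⟨u, Units.ext ((congr_arg (Matrix.map · (Ideal.Quotient.mk (I ^ N))) hu).trans hAg)⟩

theorem exists_generalLinearGroup_map_mk_pow_eq [IsAdicComplete I R] (g : ℕ → GL m R)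
    (hg : ∀ N, GeneralLinearGroup.map (Ideal.Quotient.mk (I ^ N)) (g (N + 1)) =
      GeneralLinearGroup.map (Ideal.Quotient.mk (I ^ N)) (g N)) :
    ∃ L : GL m R, ∀ N, GeneralLinearGroup.map (Ideal.Quotient.mk (I ^ N)) L =
      GeneralLinearGroup.map (Ideal.Quotient.mk (I ^ N)) (g N) := by
  obtain ⟨L, hL⟩ := exists_map_mk_pow_eq (I := I) (fun N => (g N).val)
    fun N => congr_arg Units.val (hg N)
  obtain ⟨u, rfl⟩ : IsUnit L := isUnit_of_isUnit_map_mk_pow (I := I) one_ne_zero <| by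
    rw [hL 1]
    exact (GeneralLinearGroup.map (Ideal.Quotient.mk (I ^ 1)) (g 1)).isUnit
  exact ⟨u, fun N => Units.ext (hL N)⟩

end Adic

theorem iterate_quotientMap_mk {R : Type*} [CommRing R] {I : Ideal R} {f : R →+* R}
    (h : I ≤ I.comap f) (k : ℕ) (r : R) :
    (Ideal.quotientMap I f h)^[k] (Ideal.Quotient.mk I r) = Ideal.Quotient.mk I (f^[k] r) :=
  (Function.Semiconj.iterate_right (f := Ideal.Quotient.mk I)
    (fun _ => (Ideal.quotientMap_mk (H := h)).symm) k r).symm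

theorem pow_le_comap_pow {R S : Type*} [CommRing R] [CommRing S] {I : Ideal R} {J : Ideal S}
    {f : R →+* S} (h : I ≤ J.comap f) (N : ℕ) : I ^ N ≤ (J ^ N).comap f :=
  (Ideal.pow_right_mono h N).trans (Ideal.le_comap_pow f N)

theorem matrix_map_quotientMap {R S : Type*} [CommRing R] [CommRing S] {I : Ideal R}
    {J : Ideal S} {f : R →+* S} (h : I ≤ J.comap f) {m n : Type*} (A : Matrix m n R) :
    (A.map (Ideal.Quotient.mk I)).map (Ideal.quotientMap J f h) =
      (A.map f).map (Ideal.Quotient.mk J) := by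
  ext a b
  exact Ideal.quotientMap_mk (H := h)

theorem generalLinearGroup_map_quotientMap {R S : Type*} [CommRing R] [CommRing S] {I : Ideal R}
    {J : Ideal S} {f : R →+* S} (h : I ≤ J.comap f) {m : Type*} [Fintype m] [DecidableEq m]
    (g : GL m R) :
    GeneralLinearGroup.map (Ideal.quotientMap J f h)
        (GeneralLinearGroup.map (Ideal.Quotient.mk I) g) =
      GeneralLinearGroup.map (Ideal.Quotient.mk J) (GeneralLinearGroup.map f g) :=
  Units.ext (matrix_map_quotientMap h g.val)

/-- The ring homomorphism `i : (R, φ) → (S, ψ)` induces, modulo every power of `φ`- and `ψ`-stable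
ideals `I` and `J`, an isomorphism of the colimits over Frobenius, i.e.
`colim_φ R ⧸ I ^ N ≃ colim_ψ S ⧸ J ^ N`. -/
structure IsAdicIterateEquiv {R S : Type*} [CommRing R] [CommRing S] (I : Ideal R) (J : Ideal S)
    (φ : R →+* R) (ψ : S →+* S) (i : R →+* S) : Prop where
  comm : ψ.comp i = i.comp φ
  source_le_comap : I ≤ I.comap φ
  target_le_comap : J ≤ J.comap ψ
  le_comap : I ≤ J.comap i
  exists_sub_iterate_mem : ∀ N s, ∃ k r, i r - ψ^[k] s ∈ J ^ N
  exists_iterate_mem : ∀ N r, i r ∈ J ^ N → ∃ k, φ^[k] r ∈ I ^ N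

namespace IsAdicIterateEquiv

variable {R S : Type*} [CommRing R] [CommRing S] {I : Ideal R} {J : Ideal S}
  {φ : R →+* R} {ψ : S →+* S} {i : R →+* S} {m n : Type*} [Fintype m] [Fintype n]

theorem isIterateEquiv_quotientMap (D : IsAdicIterateEquiv I J φ ψ i) (N : ℕ) :
    IsIterateEquiv (Ideal.quotientMap (I ^ N) φ (pow_le_comap_pow D.source_le_comap N))
      (Ideal.quotientMap (J ^ N) ψ (pow_le_comap_pow D.target_le_comap N))
      (Ideal.quotientMap (J ^ N) i (pow_le_comap_pow D.le_comap N)) := by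
  refine ⟨fun y => ?_, fun y' => ?_, fun y z hyz => ?_⟩
  · obtain ⟨r, rfl⟩ := Ideal.Quotient.mk_surjective y
    simp only [Ideal.quotientMap_mk]
    exact congr_arg _ (RingHom.congr_fun D.comm r).symm
  · obtain ⟨s, rfl⟩ := Ideal.Quotient.mk_surjective y'
    obtain ⟨k, r, hr⟩ := D.exists_sub_iterate_mem N s
    exact ⟨k, Ideal.Quotient.mk _ r, by
      rw [iterate_quotientMap_mk, Ideal.quotientMap_mk]; exact Ideal.Quotient.eq.2 hr⟩
  · obtain ⟨r, rfl⟩ := Ideal.Quotient.mk_surjective y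
    obtain ⟨t, rfl⟩ := Ideal.Quotient.mk_surjective z
    rw [Ideal.quotientMap_mk, Ideal.quotientMap_mk, Ideal.Quotient.eq, ← map_sub] at hyz
    obtain ⟨k, hk⟩ := D.exists_iterate_mem N _ hyz
    exact ⟨k, by
      rw [iterate_quotientMap_mk, iterate_quotientMap_mk, Ideal.Quotient.eq, ← iterate_map_sub]
      exact hk⟩

theorem exists_forall_map_mk_pow_eq_iff (D : IsAdicIterateEquiv I J φ ψ i) (P : Matrix m m R)
    (Q : Matrix n n R) {H : Matrix m n S} (hH : P.map i * H.map ψ * Q.map i = H) (N : ℕ) :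
    ∃ K₀ : Matrix m n R, ∀ K : Matrix m n R,
      K.map (Ideal.Quotient.mk (I ^ N)) = K₀.map (Ideal.Quotient.mk (I ^ N)) ↔
        (P * K.map φ * Q).map (Ideal.Quotient.mk (I ^ N)) = K.map (Ideal.Quotient.mk (I ^ N)) ∧
          (K.map i).map (Ideal.Quotient.mk (J ^ N)) = H.map (Ideal.Quotient.mk (J ^ N)) := by
  have htwist := (D.isIterateEquiv_quotientMap N).matrix_twist
    (P.map (Ideal.Quotient.mk (I ^ N))) (Q.map (Ideal.Quotient.mk (I ^ N)))
  obtain ⟨K₀, hK₀, huniq⟩ :=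
    htwist.existsUnique_isFixedPt (y' := H.map (Ideal.Quotient.mk (J ^ N))) <| by
      simp only [IsFixedPt, matrix_map_quotientMap, ← Matrix.map_mul, hH]
  obtain ⟨K₀, rfl⟩ : ∃ K : Matrix m n R, K.map (Ideal.Quotient.mk (I ^ N)) = K₀ := by
    choose K hK using fun a b => Ideal.Quotient.mk_surjective (K₀ a b)
    exact ⟨Matrix.of K, by ext a b; exact hK a b⟩
  simp only [IsFixedPt] at hK₀ huniq
  simp only [Matrix.map_mul, ← matrix_map_quotientMap (pow_le_comap_pow D.source_le_comap N),
    ← matrix_map_quotientMap (pow_le_comap_pow D.le_comap N)]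
  exact ⟨K₀, fun K => ⟨fun hK => by rwa [hK], huniq _⟩⟩

theorem existsUnique_twist_fixed [IsAdicComplete I R] [IsAdicComplete J S]
    (D : IsAdicIterateEquiv I J φ ψ i) (P : Matrix m m R) (Q : Matrix n n R) {H : Matrix m n S}
    (hH : P.map i * H.map ψ * Q.map i = H) :
    ∃! K : Matrix m n R, P * K.map φ * Q = K ∧ K.map i = H := by
  choose K hK using D.exists_forall_map_mk_pow_eq_iff P Q hH
  obtain ⟨L, hL⟩ := exists_map_mk_pow_eq (I := I) K fun N =>
    have hsucc := (hK (N + 1) (K (N + 1))).1 rfl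
    (hK N (K (N + 1))).2 ⟨map_mk_pow_eq_of_le N.le_succ hsucc.1,
      map_mk_pow_eq_of_le N.le_succ hsucc.2⟩
  refine ⟨L, ⟨eq_of_map_mk_pow_eq (I := I) fun N => ((hK N L).1 (hL N)).1,
    eq_of_map_mk_pow_eq (I := J) fun N => ((hK N L).1 (hL N)).2⟩, fun K' hK' => ?_⟩
  refine eq_of_map_mk_pow_eq (I := I) fun N => ?_
  rw [hL N, hK N, hK'.1, hK'.2]
  exact ⟨rfl, rfl⟩

theorem existsUnique_intertwining [DecidableEq m] [DecidableEq n] [IsAdicComplete I R]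
    [IsAdicComplete J S] (D : IsAdicIterateEquiv I J φ ψ i) (P : GL m R) (Q : GL n R)
    {H : Matrix m n S} (hH : P.val.map i * H.map ψ = H * Q.val.map i) :
    ∃! K : Matrix m n R, P.val * K.map φ = K * Q.val ∧ K.map i = H := by
  have hQ : Q.val.map i * (Q⁻¹).val.map i = 1 := by
    rw [← Matrix.map_mul, Units.mul_inv, Matrix.map_one _ i.map_zero i.map_one]
  have hiff (K : Matrix m n R) :
      P.val * K.map φ = K * Q.val ↔ P.val * K.map φ * (Q⁻¹).val = K := by
    refine ⟨fun h => ?_, fun h => ?_⟩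
    · rw [h, Matrix.mul_assoc, Units.mul_inv, Matrix.mul_one]
    · conv_rhs => rw [← h, Matrix.mul_assoc, Units.inv_mul, Matrix.mul_one]
  simp only [hiff]
  refine D.existsUnique_twist_fixed P.val (Q⁻¹).val ?_
  rw [hH, Matrix.mul_assoc, hQ, Matrix.mul_one]

variable [DecidableEq m]

theorem map_mk_pow_mul_eq_iff (D : IsAdicIterateEquiv I J φ ψ i) {X C : GL m S} {Z : GL m R}
    {N : ℕ} :
    GeneralLinearGroup.map (Ideal.Quotient.mk (J ^ N)) (C * X) =
        GeneralLinearGroup.map (Ideal.Quotient.mk (J ^ N))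
          (GeneralLinearGroup.map i Z * GeneralLinearGroup.map ψ C) ↔
      GeneralLinearGroup.map (Ideal.Quotient.mk (J ^ N)) C *
          GeneralLinearGroup.map (Ideal.Quotient.mk (J ^ N)) X =
        GeneralLinearGroup.map (Ideal.quotientMap (J ^ N) i (pow_le_comap_pow D.le_comap N))
            (GeneralLinearGroup.map (Ideal.Quotient.mk (I ^ N)) Z) *
          GeneralLinearGroup.map
            (Ideal.quotientMap (J ^ N) ψ (pow_le_comap_pow D.target_le_comap N))
            (GeneralLinearGroup.map (Ideal.Quotient.mk (J ^ N)) C) := by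
  rw [map_mul, map_mul, generalLinearGroup_map_quotientMap, generalLinearGroup_map_quotientMap]

variable [IsAdicComplete I R] [IsAdicComplete J S]

theorem exists_map_mk_pow_mul_eq (D : IsAdicIterateEquiv I J φ ψ i) (X : GL m S) (N : ℕ) :
    ∃ (C : GL m S) (Z : GL m R),
      GeneralLinearGroup.map (Ideal.Quotient.mk (J ^ N)) (C * X) =
        GeneralLinearGroup.map (Ideal.Quotient.mk (J ^ N))
          (GeneralLinearGroup.map i Z * GeneralLinearGroup.map ψ C) := by
  obtain ⟨c, z, hcz⟩ :=
    ((D.isIterateEquiv_quotientMap N).generalLinearGroup_map m).exists_mul_eq_map_mul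
      (GeneralLinearGroup.map (Ideal.Quotient.mk (J ^ N)) X)
  obtain ⟨C, rfl⟩ := generalLinearGroup_map_mk_pow_surjective N c
  obtain ⟨Z, rfl⟩ := generalLinearGroup_map_mk_pow_surjective N z
  exact ⟨C, Z, D.map_mk_pow_mul_eq_iff.2 hcz⟩

/-- Two solutions modulo `J ^ N` differ by a matrix over `R ⧸ I ^ N`, so any solution modulo
`J ^ (N + 1)` can be corrected to one that lifts the given solution. -/
theorem exists_lift_map_mk_pow_mul_eq (D : IsAdicIterateEquiv I J φ ψ i) {X C : GL m S}
    {Z : GL m R} {N : ℕ}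
    (hCZ : GeneralLinearGroup.map (Ideal.Quotient.mk (J ^ N)) (C * X) =
      GeneralLinearGroup.map (Ideal.Quotient.mk (J ^ N))
        (GeneralLinearGroup.map i Z * GeneralLinearGroup.map ψ C)) :
    ∃ (C' : GL m S) (Z' : GL m R),
      GeneralLinearGroup.map (Ideal.Quotient.mk (J ^ (N + 1))) (C' * X) =
        GeneralLinearGroup.map (Ideal.Quotient.mk (J ^ (N + 1)))
          (GeneralLinearGroup.map i Z' * GeneralLinearGroup.map ψ C') ∧
      GeneralLinearGroup.map (Ideal.Quotient.mk (J ^ N)) C' =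
        GeneralLinearGroup.map (Ideal.Quotient.mk (J ^ N)) C ∧
      GeneralLinearGroup.map (Ideal.Quotient.mk (I ^ N)) Z' =
        GeneralLinearGroup.map (Ideal.Quotient.mk (I ^ N)) Z := by
  obtain ⟨C₁, Z₁, h₁⟩ := D.exists_map_mk_pow_mul_eq X (N + 1)
  have h₁N : GeneralLinearGroup.map (Ideal.Quotient.mk (J ^ N)) (C₁ * X) =
      GeneralLinearGroup.map (Ideal.Quotient.mk (J ^ N))
        (GeneralLinearGroup.map i Z₁ * GeneralLinearGroup.map ψ C₁) :=
    Units.ext (map_mk_pow_eq_of_le N.le_succ (congr_arg Units.val h₁))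
  obtain ⟨k, hkC, hkZ⟩ :=
    ((D.isIterateEquiv_quotientMap N).generalLinearGroup_map m).exists_map_mul_eq
      (D.map_mk_pow_mul_eq_iff.1 hCZ) (D.map_mk_pow_mul_eq_iff.1 h₁N)
  obtain ⟨K, rfl⟩ := generalLinearGroup_map_mk_pow_surjective N k
  rw [generalLinearGroup_map_quotientMap, ← map_mul] at hkC hkZ
  have hcomm : GeneralLinearGroup.map ψ (GeneralLinearGroup.map i K) =
      GeneralLinearGroup.map i (GeneralLinearGroup.map φ K) :=
    GeneralLinearGroup.ext fun a b => RingHom.congr_fun D.comm (K a b)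
  refine ⟨GeneralLinearGroup.map i K * C₁, K * Z₁ * (GeneralLinearGroup.map φ K)⁻¹, ?_, hkC, ?_⟩
  · have hcancel : GeneralLinearGroup.map i (K * Z₁ * (GeneralLinearGroup.map φ K)⁻¹) *
        GeneralLinearGroup.map ψ (GeneralLinearGroup.map i K * C₁) =
        GeneralLinearGroup.map i K *
          (GeneralLinearGroup.map i Z₁ * GeneralLinearGroup.map ψ C₁) := by
      rw [map_mul _ _ C₁, hcomm]
      simp only [map_mul, map_inv, mul_assoc, inv_mul_cancel_left]
    rw [hcancel, mul_assoc, map_mul, h₁, ← map_mul]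
  · rw [map_mul, hkZ, map_inv, mul_inv_cancel_right]

theorem exists_mul_eq_map_mul (D : IsAdicIterateEquiv I J φ ψ i) (X : GL m S) :
    ∃ (C : GL m S) (Z : GL m R),
      C * X = GeneralLinearGroup.map i Z * GeneralLinearGroup.map ψ C := by
  have hstep (N : ℕ) (C : GL m S) (Z : GL m R) := D.exists_lift_map_mk_pow_mul_eq
    (X := X) (C := C) (Z := Z) (N := N)
  choose! C' Z' hsol hC' hZ' using hstep
  let seq (N : ℕ) : GL m S × GL m R :=
    N.rec (1, 1) fun N CZ => (C' N CZ.1 CZ.2, Z' N CZ.1 CZ.2)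
  have hseq (N : ℕ) : GeneralLinearGroup.map (Ideal.Quotient.mk (J ^ N)) ((seq N).1 * X) =
      GeneralLinearGroup.map (Ideal.Quotient.mk (J ^ N))
        (GeneralLinearGroup.map i (seq N).2 * GeneralLinearGroup.map ψ (seq N).1) := by
    induction N with
    | zero =>
      have : Subsingleton (S ⧸ J ^ 0) :=
        Ideal.Quotient.subsingleton_iff.2 <| by rw [pow_zero, Ideal.one_eq_top]
      exact Subsingleton.elim _ _
    | succ N ih => exact hsol N _ _ ih
  obtain ⟨C, hC⟩ := exists_generalLinearGroup_map_mk_pow_eq (I := J) (fun N => (seq N).1)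
    fun N => hC' N _ _ (hseq N)
  obtain ⟨Z, hZ⟩ := exists_generalLinearGroup_map_mk_pow_eq (I := I) (fun N => (seq N).2)
    fun N => hZ' N _ _ (hseq N)
  refine ⟨C, Z, Units.ext <| eq_of_map_mk_pow_eq (I := J) fun N => congr_arg Units.val <|
    D.map_mk_pow_mul_eq_iff.2 ?_⟩
  rw [hC, hZ]
  exact D.map_mk_pow_mul_eq_iff.1 (hseq N)

end IsAdicIterateEquiv

section Semilinear

variable {R S : Type*} [CommRing R] [CommRing S] {ι κ : Type*}

theorem comp_comp_of_comm {φ : R →+* R} {ψ : S →+* S} {σ : R →+* S} (h : ψ.comp σ = σ.comp φ)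
    (x : ι → R) : ψ ∘ (σ ∘ x) = σ ∘ (φ ∘ x) :=
  funext fun a => RingHom.congr_fun h (x a)

theorem comp_pi_single_one [DecidableEq ι] (σ : R →+* S) (a : ι) :
    σ ∘ (Pi.single a 1 : ι → R) = Pi.single a 1 := by
  ext b
  simp only [Function.comp_apply, Pi.single_apply, apply_ite σ, map_one, map_zero]

theorem semilinearMap_ext_of_comp [Finite ι] {S' T : Type*} [CommRing S'] [AddCommGroup T]
    [Module S' T] (σ : R →+* S) {τ : S →+* S'} {f g : (ι → S) →ₛₗ[τ] T}
    (h : ∀ x : ι → R, f (σ ∘ x) = g (σ ∘ x)) : f = g := by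
  classical
  cases nonempty_fintype ι
  have hsingle (a : ι) : f (Pi.single a 1) = g (Pi.single a 1) := by
    rw [← comp_pi_single_one σ a, h]
  refine LinearMap.ext fun y => ?_
  rw [pi_eq_sum_univ' y]
  simp only [map_sum, map_smulₛₗ]
  exact Finset.sum_congr rfl fun a _ => congr_arg _ (hsingle a)

variable [Fintype ι]

theorem comp_mulVec (σ : R →+* S) (A : Matrix κ ι R) (x : ι → R) :
    σ ∘ (A *ᵥ x) = A.map σ *ᵥ (σ ∘ x) :=
  funext fun a => RingHom.map_mulVec σ A x a

theorem mulVec_coe_range_mulVecLin {ε : Matrix ι ι R} (hε : ε * ε = ε)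
    (m : LinearMap.range ε.mulVecLin) : ε *ᵥ m.val = m := by
  obtain ⟨x, hx⟩ := m.2
  rw [← hx, Matrix.mulVecLin_apply, Matrix.mulVec_mulVec, hε]

theorem mulVec_inv_mulVec [DecidableEq ι] (X : GL ι R) (x : ι → R) :
    X.val *ᵥ (X⁻¹).val *ᵥ x = x := by
  rw [Matrix.mulVec_mulVec, Units.mul_inv, Matrix.one_mulVec]

theorem inv_mulVec_mulVec [DecidableEq ι] (X : GL ι R) (x : ι → R) :
    (X⁻¹).val *ᵥ X.val *ᵥ x = x := by
  rw [Matrix.mulVec_mulVec, Units.inv_mul, Matrix.one_mulVec]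

/-- The `σ`-semilinear map of free modules `x ↦ X σ(x)` attached to a matrix `X` over the
target. -/
def semilinearMulVec (σ : R →+* S) (X : Matrix κ ι S) : (ι → R) →ₛₗ[σ] (κ → S) where
  toFun x := X *ᵥ (σ ∘ x)
  map_add' x y := by
    rw [← Matrix.mulVec_add]; congr 1; ext a; exact map_add σ _ _
  map_smul' r x := by
    rw [← Matrix.mulVec_smul]; congr 1; ext a; exact map_mul σ _ _

theorem semilinearMulVec_apply (σ : R →+* S) (X : Matrix κ ι S) (x : ι → R) :
    semilinearMulVec σ X x = X *ᵥ (σ ∘ x) := rfl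

theorem semilinearMulVec_one_apply [DecidableEq ι] (σ : R →+* S) (x : ι → R) :
    semilinearMulVec σ 1 x = σ ∘ x := Matrix.one_mulVec _

theorem matrix_ext_of_comp (σ : R →+* S) {A B : Matrix κ ι S}
    (h : ∀ x : ι → R, A *ᵥ (σ ∘ x) = B *ᵥ (σ ∘ x)) : A = B := by
  classical
  exact Matrix.toLin'.injective (semilinearMap_ext_of_comp σ fun x => by simpa using h x)

end Semilinear

namespace IsBaseChangeAlong

variable {R S : Type u} [CommRing R] [CommRing S] {σ : R →+* S}
  {M : Type u} [AddCommGroup M] [Module R M] {N : Type u} [AddCommGroup N] [Module S N]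
  {b : M →ₛₗ[σ] N} {T : Type u} [AddCommGroup T]

/-- The linear map out of a base change determined by a semilinear map. -/
noncomputable def lift [Module S T] (hb : IsBaseChangeAlong σ M N b) (u : M →ₛₗ[σ] T) :
    N →ₗ[S] T :=
  (hb T u).choose

theorem lift_apply [Module S T] (hb : IsBaseChangeAlong σ M N b) (u : M →ₛₗ[σ] T) (m : M) :
    hb.lift u (b m) = u m :=
  (hb T u).choose_spec.1 m

theorem ext {S' : Type u} [CommRing S'] {τ : S →+* S'} [Module S' T]
    (hb : IsBaseChangeAlong σ M N b) {f g : N →ₛₗ[τ] T} (h : ∀ m, f (b m) = g (b m)) : f = g := by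
  let : Module S T := Module.compHom T τ
  let restrict (f : N →ₛₗ[τ] T) : N →ₗ[S] T := { f with map_smul' := f.map_smulₛₗ }
  have hfg : restrict f = restrict g :=
    (hb T ((restrict f).comp b)).unique (fun _ => rfl) fun m => (h m).symm
  exact LinearMap.ext fun n => LinearMap.congr_fun hfg n

theorem of_retract {P Q : Type u} [AddCommGroup P] [Module R P] [AddCommGroup Q] [Module S Q]
    {B : P →ₛₗ[σ] Q} (hB : IsBaseChangeAlong σ P Q B) {p : P →ₗ[R] M} {j : M →ₗ[R] P}
    {q : Q →ₗ[S] N} {k : N →ₗ[S] Q} (hpj : ∀ m, p (j m) = m) (hqk : ∀ n, q (k n) = n)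
    (hp : ∀ x, b (p x) = q (B x)) (hj : ∀ m, k (b m) = B (j m)) : IsBaseChangeAlong σ M N b := by
  intro T _ _ u
  refine ⟨(hB.lift (u.comp p)).comp k, fun m => ?_, fun v hv => ?_⟩
  · rw [LinearMap.comp_apply, hj, hB.lift_apply, LinearMap.comp_apply, hpj]
  · have hvq : v.comp q = hB.lift (u.comp p) := hB.ext fun x => by
      rw [hB.lift_apply, LinearMap.comp_apply, ← hp, hv, LinearMap.comp_apply]
    ext n
    rw [← hvq, LinearMap.comp_apply, LinearMap.comp_apply, hqk]

end IsBaseChangeAlong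

theorem isBaseChangeAlong_semilinearMulVec {R S : Type u} [CommRing R] [CommRing S] {ι : Type}
    [Fintype ι] [DecidableEq ι] (σ : R →+* S) (X : GL ι S) :
    IsBaseChangeAlong σ (ι → R) (ι → S) (semilinearMulVec σ X.val) := by
  intro T _ _ u
  have happly (x : ι → R) :
      Fintype.linearCombination S (fun a => u (Pi.single a 1)) (σ ∘ x) = u x := by
    rw [Fintype.linearCombination_apply]
    conv_rhs => rw [pi_eq_sum_univ' x, map_sum]
    exact Finset.sum_congr rfl fun a _ => (u.map_smulₛₗ (x a) _).symm
  refine ⟨Fintype.linearCombination S (fun a => u (Pi.single a 1)) ∘ₗ (X⁻¹).val.mulVecLin,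
    fun x => ?_, fun v hv => ?_⟩
  · rw [LinearMap.comp_apply, semilinearMulVec_apply, Matrix.mulVecLin_apply, inv_mulVec_mulVec,
      happly]
  · have hvX : v ∘ₗ X.val.mulVecLin = Fintype.linearCombination S (fun a => u (Pi.single a 1)) :=
      semilinearMap_ext_of_comp σ fun x => (hv x).trans (happly x).symm
    refine LinearMap.ext fun y => ?_
    rw [← hvX, LinearMap.comp_apply, LinearMap.comp_apply, Matrix.mulVecLin_apply,
      Matrix.mulVecLin_apply, mulVec_inv_mulVec]

section Schanuel

variable {R P P' M : Type*} [Ring R] [AddCommGroup P] [Module R P] [AddCommGroup P']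
  [Module R P'] [AddCommGroup M] [Module R M]

/-- Schanuel's lemma for split surjections. -/
theorem exists_linearEquiv_prod_of_split {f : P →ₗ[R] M} {s : M →ₗ[R] P} {f' : P' →ₗ[R] M}
    {s' : M →ₗ[R] P'} (hfs : ∀ m, f (s m) = m) (hfs' : ∀ m, f' (s' m) = m) :
    ∃ W : (P' × P) ≃ₗ[R] (P × P'), (∀ x, f (W x).1 = f' x.1) ∧ ∀ m, W (s' m, 0) = (s m, 0) := by
  let V : (P' × P) →ₗ[R] (P × P') :=
    (s ∘ₗ f' ∘ₗ .fst R P' P + .snd R P' P - s ∘ₗ f ∘ₗ .snd R P' P).prod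
      (.fst R P' P - s' ∘ₗ f' ∘ₗ .fst R P' P + s' ∘ₗ f ∘ₗ .snd R P' P)
  let V' : (P × P') →ₗ[R] (P' × P) :=
    (s' ∘ₗ f ∘ₗ .fst R P P' + .snd R P P' - s' ∘ₗ f' ∘ₗ .snd R P P').prod
      (.fst R P P' - s ∘ₗ f ∘ₗ .fst R P P' + s ∘ₗ f' ∘ₗ .snd R P P')
  have hV (x) : V x = (s (f' x.1) + x.2 - s (f x.2), x.1 - s' (f' x.1) + s' (f x.2)) := rfl
  have hV' (x) : V' x = (s' (f x.1) + x.2 - s' (f' x.2), x.1 - s (f x.1) + s (f' x.2)) := rfl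
  have hVV' : V ∘ₗ V' = .id := by
    refine LinearMap.ext fun x => Prod.ext ?_ ?_ <;>
      simp only [LinearMap.comp_apply, hV, hV', map_add, map_sub, hfs, hfs', LinearMap.id_apply] <;>
      abel
  have hV'V : V' ∘ₗ V = .id := by
    refine LinearMap.ext fun x => Prod.ext ?_ ?_ <;>
      simp only [LinearMap.comp_apply, hV, hV', map_add, map_sub, hfs, hfs', LinearMap.id_apply] <;>
      abel
  refine ⟨.ofLinearMap V V' hVV' hV'V, fun x => ?_, fun m => ?_⟩
  · simp only [LinearEquiv.coe_ofLinearMap, hV, map_add, map_sub, hfs, add_sub_cancel_right]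
  · simp only [LinearEquiv.coe_ofLinearMap, hV, hfs', map_zero, add_zero, sub_zero, sub_self]

end Schanuel

namespace EtaleModuleOver

variable {R S : Type u} [CommRing R] [CommRing S] {φ : R →+* R} {ψ : S →+* S} {σ : R →+* S}
  {ι κ : Type} [Fintype ι] [DecidableEq ι] [Fintype κ] [DecidableEq κ]

theorem isBaseChangeAlong_frob (M : EtaleModuleOver R φ) :
    IsBaseChangeAlong φ M.carrier M.carrier M.frob :=
  M.etale

/-- A presentation of an étale module `M` as a direct summand of a free one: `proj` and `incl`
are compatible with the Frobenius of `M` and the Frobenius `x ↦ frobMatrix · φ(x)` of `R ^ ι`. -/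
structure FreeRetract (M : EtaleModuleOver R φ) (ι : Type) [Fintype ι] [DecidableEq ι] where
  frobMatrix : GL ι R
  proj : (ι → R) →ₗ[R] M.carrier
  incl : M.carrier →ₗ[R] (ι → R)
  proj_incl : ∀ m, proj (incl m) = m
  frob_proj : ∀ x, M.frob (proj x) = proj (frobMatrix.val *ᵥ (φ ∘ x))
  incl_frob : ∀ m, incl (M.frob m) = frobMatrix.val *ᵥ (φ ∘ incl m)

theorem exists_frobenius_twist_of_split {κ : Type} [Finite κ] (M : EtaleModuleOver R φ)
    {f : (κ → R) →ₗ[R] M.carrier} {s : M.carrier →ₗ[R] (κ → R)} (hfs : ∀ m, f (s m) = m) :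
    ∃ (F : (κ → R) →ₗ[R] M.carrier) (H : M.carrier →ₗ[R] (κ → R)),
      (∀ m, F (H m) = m) ∧ (∀ x, F (φ ∘ x) = M.frob (f x)) ∧ ∀ m, H (M.frob m) = φ ∘ s m := by
  classical
  cases nonempty_fintype κ
  have hφ := isBaseChangeAlong_semilinearMulVec (ι := κ) φ 1
  let F : (κ → R) →ₗ[R] M.carrier := hφ.lift (M.frob.comp f)
  have hF (x : κ → R) : F (φ ∘ x) = M.frob (f x) := by
    rw [← semilinearMulVec_one_apply]; exact hφ.lift_apply _ x
  let H : M.carrier →ₗ[R] (κ → R) :=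
    M.isBaseChangeAlong_frob.lift ((semilinearMulVec φ (1 : Matrix κ κ R)).comp s)
  have hH (m : M.carrier) : H (M.frob m) = φ ∘ s m :=
    (M.isBaseChangeAlong_frob.lift_apply _ m).trans (semilinearMulVec_one_apply φ _)
  have hFH : F ∘ₗ H = .id := M.isBaseChangeAlong_frob.ext fun m => by
    rw [LinearMap.comp_apply, hH, hF, hfs, LinearMap.id_apply]
  exact ⟨F, H, LinearMap.congr_fun hFH, hF, hH⟩

/-- A split surjection `R ^ n → M` and its Frobenius twist are compared by Schanuel's lemma, and the
resulting automorphism of `R ^ n × R ^ n` is the required Frobenius matrix. -/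
theorem exists_freeRetract (M : EtaleModuleOver R φ) :
    ∃ n : ℕ, Nonempty (M.FreeRetract (Fin n ⊕ Fin n)) := by
  have := M.finite
  have := M.projective
  obtain ⟨n, f, hf⟩ := Module.Finite.exists_fin' R M.carrier
  obtain ⟨s, hs⟩ := Module.projective_lifting_property f .id hf
  have hfs (m : M.carrier) : f (s m) = m := LinearMap.congr_fun hs m
  obtain ⟨F, H, hFH, hF, hH⟩ := M.exists_frobenius_twist_of_split hfs
  obtain ⟨W, hW, hW'⟩ := exists_linearEquiv_prod_of_split hfs hFH
  let e := LinearEquiv.sumArrowLequivProdArrow (Fin n) (Fin n) R R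
  let X : GL (Fin n ⊕ Fin n) R :=
    GeneralLinearGroup.toLin.symm (.ofLinearEquiv (e ≪≫ₗ W ≪≫ₗ e.symm))
  have hX (x : Fin n ⊕ Fin n → R) : X.val *ᵥ x = e.symm (W (e x)) := by
    rw [← Matrix.mulVecLin_apply, ← GeneralLinearGroup.coe_toLin, MulEquiv.apply_symm_apply]
    rfl
  exact ⟨n, ⟨{
    frobMatrix := X
    proj := f ∘ₗ .fst R _ _ ∘ₗ e.toLinearMap
    incl := e.symm.toLinearMap ∘ₗ .inl R _ _ ∘ₗ s
    proj_incl := hfs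
    frob_proj := fun x => by
      simp only [hX, LinearMap.comp_apply, LinearEquiv.coe_coe, LinearEquiv.apply_symm_apply,
        LinearMap.fst_apply, hW]
      exact (hF _).symm
    incl_frob := fun m => by
      have hcomp : φ ∘ e.symm (s m, 0) = e.symm (H (M.frob m), 0) := by
        rw [hH]
        ext (_ | _)
        exacts [rfl, map_zero φ]
      simp only [hX, LinearMap.comp_apply, LinearEquiv.coe_coe, LinearMap.inl_apply]
      rw [hcomp, LinearEquiv.apply_symm_apply, hW'] }⟩⟩

namespace FreeRetract

variable {M M₁ M₂ : EtaleModuleOver R φ} {N : EtaleModuleOver S ψ}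

/-- The projection of the base change of a retract presentation. -/
noncomputable def baseChangeProj (ρ : M.FreeRetract ι) (b : M.carrier →ₛₗ[σ] N.carrier) :
    (ι → S) →ₗ[S] N.carrier :=
  (isBaseChangeAlong_semilinearMulVec σ 1).lift (b.comp ρ.proj)

theorem baseChangeProj_comp (ρ : M.FreeRetract ι) (b : M.carrier →ₛₗ[σ] N.carrier) (x : ι → R) :
    ρ.baseChangeProj b (σ ∘ x) = b (ρ.proj x) := by
  rw [← semilinearMulVec_one_apply]
  exact IsBaseChangeAlong.lift_apply _ _ x

/-- The inclusion of the base change of a retract presentation. -/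
noncomputable def baseChangeIncl (ρ : M.FreeRetract ι) {b : M.carrier →ₛₗ[σ] N.carrier}
    (hb : IsBaseChangeAlong σ M.carrier N.carrier b) : N.carrier →ₗ[S] (ι → S) :=
  hb.lift ((semilinearMulVec σ (1 : Matrix ι ι S)).comp ρ.incl)

theorem baseChangeIncl_apply (ρ : M.FreeRetract ι) {b : M.carrier →ₛₗ[σ] N.carrier}
    (hb : IsBaseChangeAlong σ M.carrier N.carrier b) (m : M.carrier) :
    ρ.baseChangeIncl hb (b m) = σ ∘ ρ.incl m :=
  (hb.lift_apply _ m).trans (semilinearMulVec_one_apply σ _)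

/-- The image of a retract presentation under a base change compatible with Frobenius. -/
noncomputable def baseChange (ρ : M.FreeRetract ι) (hσ : ψ.comp σ = σ.comp φ)
    {b : M.carrier →ₛₗ[σ] N.carrier} (hb : IsBaseChangeAlong σ M.carrier N.carrier b)
    (hfrob : ∀ m, b (M.frob m) = N.frob (b m)) : N.FreeRetract ι where
  frobMatrix := GeneralLinearGroup.map σ ρ.frobMatrix
  proj := ρ.baseChangeProj b
  incl := ρ.baseChangeIncl hb
  proj_incl := LinearMap.congr_fun (f := ρ.baseChangeProj b ∘ₗ ρ.baseChangeIncl hb) (g := .id) <|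
    hb.ext fun m => by
      rw [LinearMap.comp_apply, baseChangeIncl_apply, baseChangeProj_comp, ρ.proj_incl,
        LinearMap.id_apply]
  frob_proj := LinearMap.congr_fun (f := N.frob.comp (ρ.baseChangeProj b))
    (g := (ρ.baseChangeProj b).comp (semilinearMulVec ψ (ρ.frobMatrix.val.map σ))) <|
    semilinearMap_ext_of_comp σ fun x => by
      rw [LinearMap.comp_apply, LinearMap.comp_apply, semilinearMulVec_apply, baseChangeProj_comp,
        comp_comp_of_comm hσ, ← comp_mulVec, baseChangeProj_comp, ← hfrob, ρ.frob_proj]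
  incl_frob := LinearMap.congr_fun (f := (ρ.baseChangeIncl hb).comp N.frob)
    (g := (semilinearMulVec ψ (ρ.frobMatrix.val.map σ)).comp (ρ.baseChangeIncl hb)) <|
    hb.ext fun m => by
      rw [LinearMap.comp_apply, LinearMap.comp_apply, semilinearMulVec_apply, baseChangeIncl_apply,
        comp_comp_of_comm hσ, ← comp_mulVec, ← hfrob, baseChangeIncl_apply, ρ.incl_frob]

/-- The change of coordinates by an invertible matrix `C`. -/
def conj (ρ : M.FreeRetract ι) (C : GL ι R) : M.FreeRetract ι where
  frobMatrix := C * ρ.frobMatrix * (GeneralLinearGroup.map φ C)⁻¹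
  proj := ρ.proj ∘ₗ (C⁻¹).val.mulVecLin
  incl := C.val.mulVecLin ∘ₗ ρ.incl
  proj_incl m := by
    simp only [LinearMap.comp_apply, Matrix.mulVecLin_apply, inv_mulVec_mulVec, ρ.proj_incl]
  frob_proj x := by
    have hcomp : (GeneralLinearGroup.map φ C)⁻¹.val *ᵥ (φ ∘ x) = φ ∘ ((C⁻¹).val *ᵥ x) := by
      rw [comp_mulVec, ← map_inv]
      rfl
    simp only [LinearMap.comp_apply, Matrix.mulVecLin_apply, ρ.frob_proj, Units.val_mul,
      ← Matrix.mulVec_mulVec, inv_mulVec_mulVec, hcomp]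
  incl_frob m := by
    have hcomp : φ ∘ (C.val *ᵥ ρ.incl m) = (GeneralLinearGroup.map φ C).val *ᵥ (φ ∘ ρ.incl m) :=
      comp_mulVec φ C.val _
    simp only [LinearMap.comp_apply, Matrix.mulVecLin_apply, ρ.incl_frob, Units.val_mul,
      ← Matrix.mulVec_mulVec, hcomp, inv_mulVec_mulVec]

/-- The matrix of a linear map between direct summands of free modules. -/
def homMatrix (ρ₁ : M₁.FreeRetract ι) (ρ₂ : M₂.FreeRetract κ)
    (h : M₁.carrier →ₗ[R] M₂.carrier) : Matrix κ ι R :=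
  LinearMap.toMatrix' (ρ₂.incl ∘ₗ h ∘ₗ ρ₁.proj)

theorem homMatrix_mulVec (ρ₁ : M₁.FreeRetract ι) (ρ₂ : M₂.FreeRetract κ)
    (h : M₁.carrier →ₗ[R] M₂.carrier) (x : ι → R) :
    ρ₁.homMatrix ρ₂ h *ᵥ x = ρ₂.incl (h (ρ₁.proj x)) :=
  LinearMap.toMatrix'_mulVec _ x

theorem frobMatrix_mul_homMatrix (ρ₁ : M₁.FreeRetract ι) (ρ₂ : M₂.FreeRetract κ)
    {h : M₁.carrier →ₗ[R] M₂.carrier} (hh : ∀ m, h (M₁.frob m) = M₂.frob (h m)) :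
    ρ₂.frobMatrix.val * (ρ₁.homMatrix ρ₂ h).map φ = ρ₁.homMatrix ρ₂ h * ρ₁.frobMatrix.val := by
  refine matrix_ext_of_comp φ fun x => ?_
  rw [← Matrix.mulVec_mulVec, ← comp_mulVec, homMatrix_mulVec, ← ρ₂.incl_frob, ← hh, ρ₁.frob_proj,
    ← Matrix.mulVec_mulVec, homMatrix_mulVec]

/-- The linear map with a given matrix between the ambient free modules. -/
noncomputable def ofMatrix (ρ₁ : M₁.FreeRetract ι) (ρ₂ : M₂.FreeRetract κ) (K : Matrix κ ι R) :
    M₁.carrier →ₗ[R] M₂.carrier :=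
  ρ₂.proj ∘ₗ K.mulVecLin ∘ₗ ρ₁.incl

theorem ofMatrix_apply (ρ₁ : M₁.FreeRetract ι) (ρ₂ : M₂.FreeRetract κ) (K : Matrix κ ι R)
    (m : M₁.carrier) : ρ₁.ofMatrix ρ₂ K m = ρ₂.proj (K *ᵥ ρ₁.incl m) := rfl

theorem ofMatrix_homMatrix (ρ₁ : M₁.FreeRetract ι) (ρ₂ : M₂.FreeRetract κ)
    (h : M₁.carrier →ₗ[R] M₂.carrier) : ρ₁.ofMatrix ρ₂ (ρ₁.homMatrix ρ₂ h) = h := by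
  ext m
  rw [ofMatrix_apply, homMatrix_mulVec, ρ₁.proj_incl, ρ₂.proj_incl]

theorem homMatrix_id_mul_self (ρ : M.FreeRetract ι) :
    ρ.homMatrix ρ .id * ρ.homMatrix ρ .id = ρ.homMatrix ρ .id :=
  Matrix.ext_of_mulVec_single fun a => by
    rw [← Matrix.mulVec_mulVec, homMatrix_mulVec, homMatrix_mulVec, LinearMap.id_apply,
      LinearMap.id_apply, ρ.proj_incl]

theorem ofMatrix_frob (ρ₁ : M₁.FreeRetract ι) (ρ₂ : M₂.FreeRetract κ) {K : Matrix κ ι R}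
    (hK : ρ₂.frobMatrix.val * K.map φ = K * ρ₁.frobMatrix.val) (m : M₁.carrier) :
    ρ₁.ofMatrix ρ₂ K (M₁.frob m) = M₂.frob (ρ₁.ofMatrix ρ₂ K m) := by
  simp only [ofMatrix_apply, ρ₁.incl_frob, ρ₂.frob_proj, comp_mulVec, Matrix.mulVec_mulVec, hK]

section BaseChange

variable {N₁ N₂ : EtaleModuleOver S ψ} {b₁ : M₁.carrier →ₛₗ[σ] N₁.carrier}
  {b₂ : M₂.carrier →ₛₗ[σ] N₂.carrier} (hσ : ψ.comp σ = σ.comp φ)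
  (hb₁ : IsBaseChangeAlong σ M₁.carrier N₁.carrier b₁)
  (hb₂ : IsBaseChangeAlong σ M₂.carrier N₂.carrier b₂)
  (hfrob₁ : ∀ m, b₁ (M₁.frob m) = N₁.frob (b₁ m)) (hfrob₂ : ∀ m, b₂ (M₂.frob m) = N₂.frob (b₂ m))
  (ρ₁ : M₁.FreeRetract ι) (ρ₂ : M₂.FreeRetract κ)

theorem homMatrix_baseChange {h : M₁.carrier →ₗ[R] M₂.carrier} {v : N₁.carrier →ₗ[S] N₂.carrier}
    (hv : ∀ m, v (b₁ m) = b₂ (h m)) :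
    (ρ₁.baseChange hσ hb₁ hfrob₁).homMatrix (ρ₂.baseChange hσ hb₂ hfrob₂) v =
      (ρ₁.homMatrix ρ₂ h).map σ :=
  matrix_ext_of_comp σ fun x => by
    rw [homMatrix_mulVec, ← comp_mulVec, homMatrix_mulVec]
    change ρ₂.baseChangeIncl hb₂ (v (ρ₁.baseChangeProj b₁ (σ ∘ x))) = _
    rw [baseChangeProj_comp, hv, baseChangeIncl_apply]

theorem ofMatrix_baseChange (K : Matrix κ ι R) (m : M₁.carrier) :
    (ρ₁.baseChange hσ hb₁ hfrob₁).ofMatrix (ρ₂.baseChange hσ hb₂ hfrob₂) (K.map σ) (b₁ m) =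
      b₂ (ρ₁.ofMatrix ρ₂ K m) := by
  change ρ₂.baseChangeProj b₂ (K.map σ *ᵥ ρ₁.baseChangeIncl hb₁ (b₁ m)) = _
  rw [baseChangeIncl_apply, ← comp_mulVec, baseChangeProj_comp, ofMatrix_apply]

end BaseChange

theorem exists_isBaseChangeAlong_of_map_eq (hσ : ψ.comp σ = σ.comp φ) (ρ : M.FreeRetract ι)
    (ρ' : N.FreeRetract ι) (hX : ρ'.frobMatrix.val = ρ.frobMatrix.val.map σ)
    (hE : (ρ.homMatrix ρ .id).map σ = ρ'.homMatrix ρ' .id) :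
    ∃ b : M.carrier →ₛₗ[σ] N.carrier,
      (∀ m, b (M.frob m) = N.frob (b m)) ∧ IsBaseChangeAlong σ M.carrier N.carrier b := by
  have hEσ (x : ι → R) : σ ∘ ρ.incl (ρ.proj x) = ρ'.incl (ρ'.proj (σ ∘ x)) := by
    simpa only [← comp_mulVec, homMatrix_mulVec, LinearMap.id_apply] using
      congr_arg (· *ᵥ (σ ∘ x)) hE
  let b : M.carrier →ₛₗ[σ] N.carrier := (ρ'.proj.comp (semilinearMulVec σ 1)).comp ρ.incl
  have hb (m : M.carrier) : b m = ρ'.proj (σ ∘ ρ.incl m) :=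
    congr_arg ρ'.proj (semilinearMulVec_one_apply σ (ρ.incl m))
  refine ⟨b, fun m => ?_, (isBaseChangeAlong_semilinearMulVec σ 1).of_retract ρ.proj_incl
    ρ'.proj_incl (fun x => ?_) fun m => ?_⟩
  · rw [hb, hb, ρ.incl_frob, comp_mulVec, ρ'.frob_proj, hX, comp_comp_of_comm hσ]
  · rw [hb, Units.val_one, semilinearMulVec_one_apply, hEσ, ρ'.proj_incl]
  · rw [hb, Units.val_one, semilinearMulVec_one_apply, ← hEσ, ρ.proj_incl]

end FreeRetract

section OfIdempotent

variable (Z : GL ι R) {ε : Matrix ι ι R}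

/-- The Frobenius `x ↦ Z φ(x)`, corestricted to the range of `ε`. -/
def rangeFrob (ε : Matrix ι ι R) :
    LinearMap.range ε.mulVecLin →ₛₗ[φ] LinearMap.range ε.mulVecLin :=
  (ε.mulVecLin.rangeRestrict.comp (semilinearMulVec φ Z.val)).comp
    (LinearMap.range ε.mulVecLin).subtype

theorem coe_rangeFrob (hε : ε * ε = ε) (hεZ : Z.val * ε.map φ = ε * Z.val)
    (m : LinearMap.range ε.mulVecLin) : (rangeFrob (φ := φ) Z ε m).val = Z.val *ᵥ (φ ∘ m.val) := by
  change ε *ᵥ (Z.val *ᵥ (φ ∘ m.val)) = _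
  rw [Matrix.mulVec_mulVec, ← hεZ, ← Matrix.mulVec_mulVec, ← comp_mulVec,
    mulVec_coe_range_mulVecLin hε]

theorem rangeFrob_rangeRestrict (hε : ε * ε = ε) (hεZ : Z.val * ε.map φ = ε * Z.val) (x : ι → R) :
    rangeFrob (φ := φ) Z ε (ε.mulVecLin.rangeRestrict x) =
      ε.mulVecLin.rangeRestrict (Z.val *ᵥ (φ ∘ x)) := by
  refine Subtype.ext ((coe_rangeFrob Z hε hεZ _).trans ?_)
  change Z.val *ᵥ (φ ∘ (ε *ᵥ x)) = ε *ᵥ (Z.val *ᵥ (φ ∘ x))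
  rw [comp_mulVec, Matrix.mulVec_mulVec, hεZ, ← Matrix.mulVec_mulVec]

/-- The étale module cut out of the free étale module `(R ^ ι, x ↦ Z φ(x))` by an idempotent
commuting with Frobenius. -/
def ofIdempotent (hε : ε * ε = ε) (hεZ : Z.val * ε.map φ = ε * Z.val) : EtaleModuleOver R φ where
  carrier := LinearMap.range ε.mulVecLin
  finite := inferInstance
  projective := .of_split (LinearMap.range ε.mulVecLin).subtype ε.mulVecLin.rangeRestrict <|
    LinearMap.ext fun m => Subtype.ext <| mulVec_coe_range_mulVecLin hε m
  frob := rangeFrob Z ε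
  etale := (isBaseChangeAlong_semilinearMulVec φ Z).of_retract (p := ε.mulVecLin.rangeRestrict)
    (j := (LinearMap.range ε.mulVecLin).subtype) (q := ε.mulVecLin.rangeRestrict)
    (k := (LinearMap.range ε.mulVecLin).subtype)
    (fun m => Subtype.ext <| mulVec_coe_range_mulVecLin hε m)
    (fun m => Subtype.ext <| mulVec_coe_range_mulVecLin hε m)
    (rangeFrob_rangeRestrict Z hε hεZ) (coe_rangeFrob Z hε hεZ)

/-- The tautological presentation of `ofIdempotent` as a direct summand of a free module. -/
def ofIdempotentFreeRetract (hε : ε * ε = ε) (hεZ : Z.val * ε.map φ = ε * Z.val) :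
    (ofIdempotent Z hε hεZ).FreeRetract ι where
  frobMatrix := Z
  proj := ε.mulVecLin.rangeRestrict
  incl := (LinearMap.range ε.mulVecLin).subtype
  proj_incl m := Subtype.ext <| mulVec_coe_range_mulVecLin hε m
  frob_proj := rangeFrob_rangeRestrict Z hε hεZ
  incl_frob := coe_rangeFrob Z hε hεZ

theorem homMatrix_ofIdempotentFreeRetract (hε : ε * ε = ε) (hεZ : Z.val * ε.map φ = ε * Z.val) :
    (ofIdempotentFreeRetract Z hε hεZ).homMatrix (ofIdempotentFreeRetract Z hε hεZ) .id = ε :=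
  LinearMap.toMatrix'_toLin' ε

end OfIdempotent

end EtaleModuleOver

namespace IsAdicIterateEquiv

variable {R S : Type u} [CommRing R] [CommRing S] {I : Ideal R} {J : Ideal S}
  [IsAdicComplete I R] [IsAdicComplete J S] {φ : R →+* R} {ψ : S →+* S} {σ : R →+* S}

theorem existsUnique_hom (D : IsAdicIterateEquiv I J φ ψ σ) {M₁ M₂ : EtaleModuleOver R φ}
    {N₁ N₂ : EtaleModuleOver S ψ} {b₁ : M₁.carrier →ₛₗ[σ] N₁.carrier}
    {b₂ : M₂.carrier →ₛₗ[σ] N₂.carrier} (hfrob₁ : ∀ m, b₁ (M₁.frob m) = N₁.frob (b₁ m))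
    (hfrob₂ : ∀ m, b₂ (M₂.frob m) = N₂.frob (b₂ m))
    (hb₁ : IsBaseChangeAlong σ M₁.carrier N₁.carrier b₁)
    (hb₂ : IsBaseChangeAlong σ M₂.carrier N₂.carrier b₂)
    {v : N₁.carrier →ₗ[S] N₂.carrier} (hv : ∀ x, v (N₁.frob x) = N₂.frob (v x)) :
    ∃! h : M₁.carrier →ₗ[R] M₂.carrier,
      (∀ m, h (M₁.frob m) = M₂.frob (h m)) ∧ ∀ m, v (b₁ m) = b₂ (h m) := by
  obtain ⟨n₁, ⟨ρ₁⟩⟩ := M₁.exists_freeRetract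
  obtain ⟨n₂, ⟨ρ₂⟩⟩ := M₂.exists_freeRetract
  let ρ₁' := ρ₁.baseChange D.comm hb₁ hfrob₁
  let ρ₂' := ρ₂.baseChange D.comm hb₂ hfrob₂
  obtain ⟨K, ⟨hK, hKv⟩, huniq⟩ := D.existsUnique_intertwining ρ₂.frobMatrix ρ₁.frobMatrix
    (H := ρ₁'.homMatrix ρ₂' v) (ρ₁'.frobMatrix_mul_homMatrix ρ₂' hv)
  refine ⟨ρ₁.ofMatrix ρ₂ K, ⟨ρ₁.ofMatrix_frob ρ₂ hK, fun m => ?_⟩, fun h ⟨hh, hhv⟩ => ?_⟩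
  · rw [← ρ₁.ofMatrix_baseChange D.comm hb₁ hb₂ hfrob₁ hfrob₂ ρ₂, hKv, ρ₁'.ofMatrix_homMatrix]
  · rw [← ρ₁.ofMatrix_homMatrix ρ₂ h, huniq _ ⟨ρ₁.frobMatrix_mul_homMatrix ρ₂ hh,
      (ρ₁.homMatrix_baseChange D.comm hb₁ hb₂ hfrob₁ hfrob₂ ρ₂ hhv).symm⟩]

variable {ι : Type} [Fintype ι] [DecidableEq ι]

theorem exists_idempotent_map_eq (D : IsAdicIterateEquiv I J φ ψ σ) {Z : GL ι R}
    {E : Matrix ι ι S} (hE : E * E = E) (hEZ : Z.val.map σ * E.map ψ = E * Z.val.map σ) :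
    ∃ ε : Matrix ι ι R, ε * ε = ε ∧ Z.val * ε.map φ = ε * Z.val ∧ ε.map σ = E := by
  obtain ⟨ε, ⟨hεZ, hεE⟩, huniq⟩ := D.existsUnique_intertwining Z Z hEZ
  refine ⟨ε, huniq _ ⟨?_, ?_⟩, hεZ, hεE⟩
  · rw [Matrix.map_mul, ← Matrix.mul_assoc, hεZ, Matrix.mul_assoc, hεZ, Matrix.mul_assoc]
  · rw [Matrix.map_mul, hεE, hE]

theorem exists_isBaseChangeAlong (D : IsAdicIterateEquiv I J φ ψ σ) (N : EtaleModuleOver S ψ) :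
    ∃ (M : EtaleModuleOver R φ) (b : M.carrier →ₛₗ[σ] N.carrier),
      (∀ m, b (M.frob m) = N.frob (b m)) ∧ IsBaseChangeAlong σ M.carrier N.carrier b := by
  obtain ⟨n, ⟨ρ⟩⟩ := N.exists_freeRetract
  obtain ⟨C, Z, hCZ⟩ := D.exists_mul_eq_map_mul ρ.frobMatrix
  let ρ' := ρ.conj C
  have hZ : ρ'.frobMatrix.val = Z.val.map σ := congr_arg Units.val (mul_inv_eq_iff_eq_mul.2 hCZ)
  obtain ⟨ε, hε, hεZ, hεE⟩ := D.exists_idempotent_map_eq ρ'.homMatrix_id_mul_self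
    (hZ ▸ ρ'.frobMatrix_mul_homMatrix ρ' fun _ => rfl)
  exact ⟨.ofIdempotent Z hε hεZ, EtaleModuleOver.FreeRetract.exists_isBaseChangeAlong_of_map_eq
    D.comm (EtaleModuleOver.ofIdempotentFreeRetract Z hε hεZ) ρ' hZ <| by
      rw [EtaleModuleOver.homMatrix_ofIdempotentFreeRetract, hεE]⟩

end IsAdicIterateEquiv

section Colimit

variable {R A : Type u} [CommRing R] [CommRing A] {φ : R →+* R} {ι : ℕ → (R →+* A)}

theorem apply_add_iterate (hι : ∀ n, (ι (n + 1)).comp φ = ι n) (k j : ℕ) (r : R) :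
    ι (k + j) (φ^[j] r) = ι k r := by
  induction j with
  | zero => rfl
  | succ j ih =>
    rw [Function.iterate_succ_apply', ← ih]
    exact RingHom.congr_fun (hι (k + j)) _

theorem exists_ringEquiv_directLimit (hι : ∀ n, (ι (n + 1)).comp φ = ι n)
    (hUP : ∀ (T : Type u) [CommRing T] (u : ℕ → (R →+* T)),
      (∀ n, (u (n + 1)).comp φ = u n) → ∃! v : A →+* T, ∀ n, v.comp (ι n) = u n) :
    ∃ e : A ≃+* Ring.DirectLimit (fun _ : ℕ => R) (fun i j _ => ⇑(φ ^ (j - i))),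
      ∀ k r, e (ι k r) = Ring.DirectLimit.of _ _ k r := by
  let of (k : ℕ) : R →+* Ring.DirectLimit (fun _ : ℕ => R) (fun i j _ => ⇑(φ ^ (j - i))) :=
    Ring.DirectLimit.of (fun _ : ℕ => R) (fun i j _ => ⇑(φ ^ (j - i))) k
  have hof (k : ℕ) : (of (k + 1)).comp φ = of k := RingHom.ext fun r => by
    have hk := Ring.DirectLimit.of_f (G := fun _ : ℕ => R) (f := fun i j _ => ⇑(φ ^ (j - i)))
      k.le_succ r
    rwa [Nat.succ_eq_add_one, Nat.add_sub_cancel_left, pow_one] at hk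
  obtain ⟨v, hv, -⟩ := hUP _ of hof
  have hcompat (i j : ℕ) (hij : i ≤ j) (r : R) : ι j ((φ ^ (j - i)) r) = ι i r := by
    obtain ⟨d, rfl⟩ := Nat.exists_eq_add_of_le hij
    rw [Nat.add_sub_cancel_left, RingHom.coe_pow, apply_add_iterate hι]
  let w := Ring.DirectLimit.lift (fun _ : ℕ => R) (fun i j _ => ⇑(φ ^ (j - i))) A ι hcompat
  have hw (k : ℕ) : w.comp (of k) = ι k := RingHom.ext fun r =>
    Ring.DirectLimit.lift_of A ι hcompat k r
  have hwv : w.comp v = .id A := (hUP A ι hι).unique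
    (fun n => by rw [RingHom.comp_assoc, hv, hw]) fun _ => rfl
  have hvw : v.comp w = .id _ := Ring.DirectLimit.hom_ext _ fun k => by
    rw [RingHom.comp_assoc]
    exact (congr_arg v.comp (hw k)).trans (hv k)
  exact ⟨.ofRingHom v w hvw hwv, fun k => RingHom.congr_fun (hv k)⟩

theorem exists_apply_eq_of_colimit (hι : ∀ n, (ι (n + 1)).comp φ = ι n)
    (hUP : ∀ (T : Type u) [CommRing T] (u : ℕ → (R →+* T)),
      (∀ n, (u (n + 1)).comp φ = u n) → ∃! v : A →+* T, ∀ n, v.comp (ι n) = u n) (a : A) :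
    ∃ k r, ι k r = a := by
  obtain ⟨e, he⟩ := exists_ringEquiv_directLimit hι hUP
  obtain ⟨k, r, hr⟩ := Ring.DirectLimit.exists_of (e a)
  exact ⟨k, r, e.injective ((he k r).trans hr)⟩

theorem exists_iterate_eq_zero_of_colimit (hι : ∀ n, (ι (n + 1)).comp φ = ι n)
    (hUP : ∀ (T : Type u) [CommRing T] (u : ℕ → (R →+* T)),
      (∀ n, (u (n + 1)).comp φ = u n) → ∃! v : A →+* T, ∀ n, v.comp (ι n) = u n) {k : ℕ} {r : R}
    (hr : ι k r = 0) : ∃ j, φ^[j] r = 0 := by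
  have : DirectedSystem (fun _ : ℕ => R) (fun i j _ => ⇑(φ ^ (j - i))) :=
    { map_self := fun i x => by rw [Nat.sub_self, pow_zero, RingHom.one_def, RingHom.id_apply]
      map_map := fun k j i hij hjk x => by
        rw [RingHom.coe_pow, RingHom.coe_pow, RingHom.coe_pow, ← Function.iterate_add_apply,
          tsub_add_tsub_cancel hjk hij] }
  obtain ⟨e, he⟩ := exists_ringEquiv_directLimit hι hUP
  obtain ⟨j, -, hj⟩ := Ring.DirectLimit.of.zero_exact (f' := fun i j _ => φ ^ (j - i))
    ((he k r).symm.trans (by rw [hr, map_zero]))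
  exact ⟨j - k, by rwa [RingHom.coe_pow] at hj⟩

theorem iterate_mem {I : Ideal R} (hI : I ≤ I.comap φ) {r : R} (hr : r ∈ I) (k : ℕ) :
    φ^[k] r ∈ I :=
  Set.MapsTo.iterate (f := φ) (s := (I : Set R)) (fun _ hx => hI hx) k hr

theorem exists_apply_eq_of_mem_map (hι : ∀ n, (ι (n + 1)).comp φ = ι n)
    (hexists : ∀ a, ∃ k r, ι k r = a) {I : Ideal R} (hI : I ≤ I.comap φ) {a : A}
    (ha : a ∈ I.map (ι 0)) : ∃ k, ∃ t ∈ I, ι k t = a := by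
  induction ha using Submodule.span_induction with
  | mem _ hx =>
    obtain ⟨t, ht, rfl⟩ := hx
    exact ⟨0, t, ht, rfl⟩
  | zero => exact ⟨0, 0, I.zero_mem, map_zero _⟩
  | add _ _ _ _ hx hy =>
    obtain ⟨k, t, ht, rfl⟩ := hx
    obtain ⟨l, t', ht', rfl⟩ := hy
    refine ⟨k + l, φ^[l] t + φ^[k] t', I.add_mem (iterate_mem hI ht l) (iterate_mem hI ht' k), ?_⟩
    rw [map_add, apply_add_iterate hι, add_comm k l, apply_add_iterate hι]
  | smul b _ _ hx =>
    obtain ⟨k, t, ht, rfl⟩ := hx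
    obtain ⟨l, r, rfl⟩ := hexists b
    refine ⟨k + l, φ^[k] r * φ^[l] t, I.mul_mem_left _ (iterate_mem hI ht l), ?_⟩
    rw [map_mul, apply_add_iterate hι, add_comm k l, apply_add_iterate hι, smul_eq_mul]

variable {S : Type u} [CommRing S] {I : Ideal R} {φA : A →+* A} {c : A →+* S} {φS : S →+* S}

theorem isAdicIterateEquiv_completed_colimit (hI : I ≤ I.comap φ)
    (hι : ∀ n, (ι (n + 1)).comp φ = ι n)
    (hUP : ∀ (T : Type u) [CommRing T] (u : ℕ → (R →+* T)),
      (∀ n, (u (n + 1)).comp φ = u n) → ∃! v : A →+* T, ∀ n, v.comp (ι n) = u n)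
    (hφA : ∀ n, φA.comp (ι n) = (ι n).comp φ) (hφS : φS.comp c = c.comp φA)
    (hmodsurj : ∀ (s : S) (n : ℕ), ∃ a : A, s - c a ∈ I.map (c.comp (ι 0)) ^ n)
    (hmodinj : ∀ (a : A) (n : ℕ), c a ∈ I.map (c.comp (ι 0)) ^ n → a ∈ I.map (ι 0) ^ n) :
    IsAdicIterateEquiv I (I.map (c.comp (ι 0))) φ φS (c.comp (ι 0)) := by
  have hexists := exists_apply_eq_of_colimit hι hUP
  have hsemiconj (k : ℕ) : Function.Semiconj (c.comp (ι k)) φ φS := fun r => by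
    rw [← RingHom.comp_apply, RingHom.comp_assoc, ← hφA, ← RingHom.comp_assoc, ← hφS]
    rfl
  have hcomm : φS.comp (c.comp (ι 0)) = (c.comp (ι 0)).comp φ :=
    RingHom.ext fun r => (hsemiconj 0 r).symm
  have htarget : I.map (c.comp (ι 0)) ≤ (I.map (c.comp (ι 0))).comap φS :=
    Ideal.map_le_iff_le_comap.2 fun r hr => by
      rw [Ideal.mem_comap, Ideal.mem_comap, ← hsemiconj 0 r]
      exact Ideal.mem_map_of_mem _ (hI hr)
  refine ⟨hcomm, hI, htarget, Ideal.le_comap_map, fun N s => ?_, fun N r hr => ?_⟩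
  · obtain ⟨a, ha⟩ := hmodsurj s N
    obtain ⟨k, r, rfl⟩ := hexists a
    have hr : φS^[k] (c (ι k r)) = c (ι 0 r) := by
      rw [← apply_add_iterate hι 0 k r, zero_add]
      exact ((hsemiconj k).iterate_right k r).symm
    refine ⟨k, r, ?_⟩
    rw [RingHom.comp_apply, ← hr, ← iterate_map_sub]
    exact iterate_mem (pow_le_comap_pow htarget N) (by rw [← neg_sub]; exact neg_mem ha) k
  · have hmem : ι 0 r ∈ (I ^ N).map (ι 0) := by
      rw [Ideal.map_pow]
      exact hmodinj _ N hr
    obtain ⟨k, t, ht, hkt⟩ := exists_apply_eq_of_mem_map hι hexists (pow_le_comap_pow hI N) hmem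
    have hzero : ι k (φ^[k] r - t) = 0 := by
      rw [map_sub, hkt, ← apply_add_iterate hι 0 k r, zero_add, sub_self]
    obtain ⟨j, hj⟩ := exists_iterate_eq_zero_of_colimit hι hUP hzero
    rw [iterate_map_sub, sub_eq_zero, ← Function.iterate_add_apply] at hj
    exact ⟨j + k, hj ▸ iterate_mem (pow_le_comap_pow hI N) ht j⟩

end Colimit

theorem etale_phi_modules_equivalence_over_completed_perfection_general
    {R A S : Type u} [CommRing R] [CommRing A] [CommRing S] (I : Ideal R)
    (φ : R →+* R) (hI : I ≤ I.comap φ) (hRcomplete : IsAdicComplete I R)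
    (φA : A →+* A) (ι : ℕ → (R →+* A))
    (hι : ∀ n, (ι (n + 1)).comp φ = ι n)
    (hUP : ∀ (T : Type u) [CommRing T] (u : ℕ → (R →+* T)),
      (∀ n, (u (n + 1)).comp φ = u n) → ∃! v : A →+* T, ∀ n, v.comp (ι n) = u n)
    (hφA : ∀ n, φA.comp (ι n) = (ι n).comp φ)
    (c : A →+* S) (φS : S →+* S)
    (hφS : φS.comp c = c.comp φA)
    (hScomplete : IsAdicComplete (I.map (c.comp (ι 0))) S)
    (hmodsurj : ∀ (s : S) (n : ℕ), ∃ a : A, s - c a ∈ I.map (c.comp (ι 0)) ^ n)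
    (hmodinj : ∀ (a : A) (n : ℕ), c a ∈ I.map (c.comp (ι 0)) ^ n → a ∈ I.map (ι 0) ^ n) :
    (∀ N : EtaleModuleOver S φS,
      ∃ (M : EtaleModuleOver R φ) (b : M.carrier →ₛₗ[c.comp (ι 0)] N.carrier),
        (∀ m, b (M.frob m) = N.frob (b m)) ∧
          IsBaseChangeAlong (c.comp (ι 0)) M.carrier N.carrier b) ∧
    (∀ (M₁ M₂ : EtaleModuleOver R φ) (N₁ N₂ : EtaleModuleOver S φS)
      (b₁ : M₁.carrier →ₛₗ[c.comp (ι 0)] N₁.carrier)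
      (b₂ : M₂.carrier →ₛₗ[c.comp (ι 0)] N₂.carrier),
      (∀ m, b₁ (M₁.frob m) = N₁.frob (b₁ m)) →
      (∀ m, b₂ (M₂.frob m) = N₂.frob (b₂ m)) →
      IsBaseChangeAlong (c.comp (ι 0)) M₁.carrier N₁.carrier b₁ →
      IsBaseChangeAlong (c.comp (ι 0)) M₂.carrier N₂.carrier b₂ →
      ∀ v : N₁.carrier →ₗ[S] N₂.carrier, (∀ x, v (N₁.frob x) = N₂.frob (v x)) →
        ∃! h : M₁.carrier →ₗ[R] M₂.carrier,
          (∀ m, h (M₁.frob m) = M₂.frob (h m)) ∧ (∀ m, v (b₁ m) = b₂ (h m))) := by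
  have D := isAdicIterateEquiv_completed_colimit hI hι hUP hφA hφS hmodsurj hmodinj
  exact ⟨D.exists_isBaseChangeAlong, fun _ _ _ _ _ _ hfrob₁ hfrob₂ hb₁ hb₂ _ hv =>
    D.existsUnique_hom hfrob₁ hfrob₂ hb₁ hb₂ hv⟩

/-- Let `p` be a prime and `R` a `p`-adically complete commutative ring with a ring
endomorphism `φ`.  Let `A = colim_φ R` be the direct limit of `R →φ R →φ ⋯` (encoded
by a cocone `ι n : R → A` with `ι (n+1) ∘ φ = ι n` and the universal property of the
colimit) with induced endomorphism `φA`, and let `S` be the `p`-adic completion of `A`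
(encoded by `c : A → S` with `S` `p`-adically complete and `A/pⁿ ≅ S/pⁿ` for all `n`)
with its induced endomorphism `φS` (characterized by `φS ∘ c = c ∘ φA`).  Then base
change along the canonical map `c ∘ ι 0 : R → S` induces an equivalence from étale
`φ`-modules over `R` to étale `φ`-modules over `S`: it is essentially surjective and
fully faithful. -/
theorem etale_phi_modules_equivalence_over_completed_perfection
    {R A S : Type u} [CommRing R] [CommRing A] [CommRing S]
    (p : ℕ) (hp : p.Prime)
    (φ : R →+* R) (hRcomplete : IsAdicComplete (Ideal.span {(p : R)}) R)
    (φA : A →+* A) (ι : ℕ → (R →+* A))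
    (hι : ∀ n, (ι (n + 1)).comp φ = ι n)
    (hUP : ∀ (T : Type u) [CommRing T] (u : ℕ → (R →+* T)),
      (∀ n, (u (n + 1)).comp φ = u n) → ∃! v : A →+* T, ∀ n, v.comp (ι n) = u n)
    (hφA : ∀ n, φA.comp (ι n) = (ι n).comp φ)
    (c : A →+* S) (φS : S →+* S)
    (hφS : φS.comp c = c.comp φA)
    (hScomplete : IsAdicComplete (Ideal.span {(p : S)}) S)
    (hmodsurj : ∀ (s : S) (n : ℕ), ∃ a : A, s - c a ∈ Ideal.span {(p : S) ^ n})
    (hmodinj : ∀ (a : A) (n : ℕ),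
      c a ∈ Ideal.span {(p : S) ^ n} → a ∈ Ideal.span {(p : A) ^ n}) :
    (∀ N : EtaleModuleOver S φS,
      ∃ (M : EtaleModuleOver R φ) (b : M.carrier →ₛₗ[c.comp (ι 0)] N.carrier),
        (∀ m, b (M.frob m) = N.frob (b m)) ∧
          IsBaseChangeAlong (c.comp (ι 0)) M.carrier N.carrier b) ∧
    (∀ (M₁ M₂ : EtaleModuleOver R φ) (N₁ N₂ : EtaleModuleOver S φS)
      (b₁ : M₁.carrier →ₛₗ[c.comp (ι 0)] N₁.carrier)
      (b₂ : M₂.carrier →ₛₗ[c.comp (ι 0)] N₂.carrier),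
      (∀ m, b₁ (M₁.frob m) = N₁.frob (b₁ m)) →
      (∀ m, b₂ (M₂.frob m) = N₂.frob (b₂ m)) →
      IsBaseChangeAlong (c.comp (ι 0)) M₁.carrier N₁.carrier b₁ →
      IsBaseChangeAlong (c.comp (ι 0)) M₂.carrier N₂.carrier b₂ →
      ∀ v : N₁.carrier →ₗ[S] N₂.carrier, (∀ x, v (N₁.frob x) = N₂.frob (v x)) →
        ∃! h : M₁.carrier →ₗ[R] M₂.carrier,
          (∀ m, h (M₁.frob m) = M₂.frob (h m)) ∧ (∀ m, v (b₁ m) = b₂ (h m))) := by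
  have hmap {B : Type u} [CommRing B] (f : R →+* B) :
      (Ideal.span {(p : R)}).map f = Ideal.span {(p : B)} := by
    rw [Ideal.map_span, Set.image_singleton, map_natCast]
  refine etale_phi_modules_equivalence_over_completed_perfection_general (Ideal.span {(p : R)}) φ
    (Ideal.map_le_iff_le_comap.1 (hmap φ).le) hRcomplete φA ι hι hUP hφA c φS hφS ?_ ?_ ?_ <;>
  simpa only [hmap, Ideal.span_singleton_pow]
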